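/- Under (A1)–(A4), suppose x_1 ∈ RB and the algorithm is run with parameters η = ξ·ε/(2·G_f·G_g·√T) and ρ = ε/√T. If in addition √T ≥ 4·R·G_g/(ε·ξ), then the iterates satisfy cumulative constraint satisfaction: ∑_{t=1}^T g(x_t) ≤ 0. -/

import Mathlib

open scoped RealInnerProductSpace Classical

noncomputable def projBall {d : ℕ} (R : ℝ) (v : EuclideanSpace ℝ (Fin d)) :
    EuclideanSpace ℝ (Fin d) := (R / max R ‖v‖) • v

def IsSubgradAt {d : ℕ} (g : EuclideanSpace ℝ (Fin d) → ℝ)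
    (x s : EuclideanSpace ℝ (Fin d)) : Prop :=
  ∀ y, g x + ⟪s, y - x⟫ ≤ g y

lemma aux_subgrad {d : ℕ} (g : EuclideanSpace ℝ (Fin d) → ℝ) (hg : ConvexOn ℝ Set.univ g)
    (hc : Continuous g)
    (p n : EuclideanSpace ℝ (Fin d)) (hn : ‖n‖ = 1)
    (hp : ∀ z, g z ≤ g p → ⟪n, z - p⟫ ≤ 0) :
    ∃ l : ℝ, 0 ≤ l ∧ ∀ z, g p + l * ⟪n, z - p⟫ ≤ g z := by
  have hnn : ⟪n, n⟫ = 1 := by rw [real_inner_self_eq_norm_sq, hn]; norm_num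
  have h0 : ∀ z, 0 ≤ ⟪n, z - p⟫ → g p ≤ g z := by
    intro z hz
    by_contra hlt
    push Not at hlt
    have hcont : Continuous (fun r : ℝ => g (z + r • n)) := by fun_prop
    have hev : ∀ᶠ r in nhds (0 : ℝ), g (z + r • n) < g p := by
      apply hcont.continuousAt.eventually_lt continuousAt_const
      simpa using hlt
    obtain ⟨δ, hδ, hb⟩ := Metric.eventually_nhds_iff.1 hev
    have h1 := hb (y := δ / 2) (by simp [abs_of_pos hδ]; linarith)
    have h2 := hp _ h1.le
    have h3 : ⟪n, z + (δ / 2) • n - p⟫ = ⟪n, z - p⟫ + δ / 2 := by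
      rw [show z + (δ / 2) • n - p = (z - p) + (δ / 2) • n by abel, inner_add_right,
        real_inner_smul_right, hnn, mul_one]
    linarith
  obtain ⟨l, hl1, hl2⟩ := exists_between_of_forall_le
    (s := insert 0 {r : ℝ | ∃ z, ⟪n, z - p⟫ < 0 ∧ r = (g z - g p) / ⟪n, z - p⟫})
    (t := {r : ℝ | ∃ z, 0 < ⟪n, z - p⟫ ∧ r = (g z - g p) / ⟪n, z - p⟫})
    ⟨0, by simp⟩ ⟨_, p + n, by simp [hn], rfl⟩ (by
      rintro a ha b ⟨w, hw, rfl⟩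
      rcases ha with rfl | ⟨z, hz, rfl⟩
      · exact div_nonneg (sub_nonneg.2 (h0 w hw.le)) hw.le
      · set a := ⟪n, z - p⟫ with ha
        set b := ⟪n, w - p⟫ with hb
        have hba : 0 < b - a := by linarith
        have hg2 := hg.2
        have hco := hg2 (Set.mem_univ z) (Set.mem_univ w) (a := b / (b - a)) (b := -a / (b - a))
          (by positivity) (div_nonneg (by linarith) hba.le) (by field_simp; ring)
        have hin : ⟪n, ((b / (b - a)) • z + (-a / (b - a)) • w) - p⟫ = 0 := by
          have : ((b / (b - a)) • z + (-a / (b - a)) • w) - p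
              = (b / (b - a)) • (z - p) + (-a / (b - a)) • (w - p) := by
            have h1 : p = (b / (b - a)) • p + (-a / (b - a)) • p := by
              rw [← add_smul]
              have : b / (b - a) + -a / (b - a) = 1 := by field_simp; ring
              rw [this, one_smul]
            rw [smul_sub, smul_sub]
            nth_rewrite 1 [h1]
            abel
          rw [this, inner_add_right, real_inner_smul_right, real_inner_smul_right, ← ha, ← hb]
          field_simp; ring
        have h4 := (h0 _ hin.ge).trans hco
        simp only [smul_eq_mul] at h4
        have h5 : g p * (b - a) ≤ b * g z + -a * g w := by
          have : b / (b - a) * g z + -a / (b - a) * g w = (b * g z + -a * g w) / (b - a) := by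
            field_simp
          rw [this, le_div_iff₀ hba] at h4
          exact h4
        rw [div_le_iff_of_neg hz, div_mul_eq_mul_div, div_le_iff₀ hw]
        nlinarith)
  refine ⟨l, hl1 (by simp), fun z => ?_⟩
  rcases lt_trichotomy ⟪n, z - p⟫ 0 with h | h | h
  · have := hl1 (Set.mem_insert_of_mem _ ⟨z, h, rfl⟩)
    rw [div_le_iff_of_neg h] at this
    linarith
  · rw [h]; have := h0 z h.ge; linarith
  · have := hl2 ⟨z, h, rfl⟩
    rw [le_div_iff₀ h] at this
    linarith

lemma aux_err {d : ℕ} (g : EuclideanSpace ℝ (Fin d) → ℝ) (hg : ConvexOn ℝ Set.univ g)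
    (hc : Continuous g) {ε σ ρ : ℝ} (hρε : ρ ≤ ε)
    (hne : ∃ z, g z = -ε)
    (hA4 : ∀ z : EuclideanSpace ℝ (Fin d), g z = -ε → ∀ sz, IsSubgradAt g z sz → σ ≤ ‖sz‖)
    (x : EuclideanSpace ℝ (Fin d)) (hx : -ρ < g x) :
    ∃ q, g q ≤ -ρ ∧ σ * ‖x - q‖ ≤ g x + ρ := by
  set K : Set (EuclideanSpace ℝ (Fin d)) := {z | g z ≤ -ε} with hK
  have hKc : IsClosed K := isClosed_le hc continuous_const
  have hKne : K.Nonempty := by obtain ⟨z, hz⟩ := hne; exact ⟨z, hz.le⟩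
  have hKconv : Convex ℝ K := by
    have := hg.convex_le (-ε)
    simpa [hK] using this
  obtain ⟨p, hpK, hpmin⟩ := exists_norm_eq_iInf_of_complete_convex hKne hKc.isComplete hKconv x
  have hin := (norm_eq_iInf_iff_real_inner_le_zero hKconv hpK).1 hpmin
  have hpK' : g p ≤ -ε := hpK
  have hxp : x ≠ p := by rintro rfl; linarith
  have hL : 0 < ‖x - p‖ := norm_pos_iff.2 (sub_ne_zero.2 hxp)
  have hcont : Continuous (fun r : ℝ => g (p + r • (x - p))) := by fun_prop
  have hgp : g p = -ε := by
    have hiv := intermediate_value_Icc (zero_le_one (α := ℝ)) hcont.continuousOn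
    obtain ⟨u, hu, hu2⟩ := hiv (show -ε ∈ _ by simp; constructor <;> linarith)
    have h1 := hin _ hu2.le
    rw [add_sub_cancel_left, real_inner_smul_right, real_inner_self_eq_norm_sq] at h1
    have : u = 0 := by
      by_contra h
      have : 0 < u := lt_of_le_of_ne hu.1 (Ne.symm h)
      have : 0 < u * ‖x - p‖ ^ 2 := by positivity
      linarith
    subst this
    simpa using hu2
  set n := (‖x - p‖)⁻¹ • (x - p) with hn
  have hn1 : ‖n‖ = 1 := by rw [hn, norm_smul, norm_inv, norm_norm]; field_simp
  obtain ⟨l, hl0, hl⟩ := aux_subgrad g hg hc p n hn1 (by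
    intro z hz
    rw [hn, real_inner_smul_left]
    exact mul_nonpos_of_nonneg_of_nonpos (by positivity) (hin z (hz.trans hgp.le)))
  have hσl : σ ≤ l := by
    have := hA4 p hgp (l • n) (fun z => by rw [real_inner_smul_left]; exact hl z)
    rwa [norm_smul, hn1, mul_one, Real.norm_of_nonneg hl0] at this
  have hlow : ∀ u : ℝ, 0 ≤ u → -ε + σ * (u * ‖x - p‖) ≤ g (p + u • (x - p)) := by
    intro u hu
    have h1 := hl (p + u • (x - p))
    rw [add_sub_cancel_left, real_inner_smul_right, hn, real_inner_smul_left,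
      real_inner_self_eq_norm_sq, hgp] at h1
    have h2 : u * (‖x - p‖⁻¹ * ‖x - p‖ ^ 2) = u * ‖x - p‖ := by field_simp
    rw [h2] at h1
    have : σ * (u * ‖x - p‖) ≤ l * (u * ‖x - p‖) := by gcongr
    linarith
  have hiv := intermediate_value_Icc (zero_le_one (α := ℝ)) hcont.continuousOn
  obtain ⟨u, hu, hu2⟩ := hiv (show -ρ ∈ _ by simp; constructor <;> linarith)
  simp only at hu2
  refine ⟨p + u • (x - p), hu2.le, ?_⟩
  have hxq : x - (p + u • (x - p)) = (1 - u) • (x - p) := by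
    rw [sub_smul, one_smul]; abel
  rw [hxq, norm_smul, Real.norm_of_nonneg (by linarith [hu.2])]
  have hlu := hlow u hu.1
  rw [hu2] at hlu
  rcases hu.1.eq_or_lt with h | h
  · subst h
    have h1 := hlow 1 zero_le_one
    simp at h1 hu2
    linarith
  · have hg2 := hg.2
    have hco := hg2 (Set.mem_univ p) (Set.mem_univ x) (a := 1 - u) (b := u)
      (by linarith [hu.2]) hu.1 (by ring)
    have he : (1 - u) • p + u • x = p + u • (x - p) := by
      rw [sub_smul, one_smul, smul_sub]; abel
    rw [he, hu2, hgp] at hco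
    simp only [smul_eq_mul] at hco
    have h3 : u * (σ * ((1 - u) * ‖x - p‖)) ≤ u * (g x + ρ) := by
      have : (1 - u) * (σ * (u * ‖x - p‖)) ≤ (1 - u) * (ε - ρ) := by
        apply mul_le_mul_of_nonneg_left _ (by linarith [hu.2])
        linarith
      nlinarith
    exact le_of_mul_le_mul_left h3 h

lemma aux_projBall_mem {d : ℕ} {R : ℝ} (hR : 0 < R) (v : EuclideanSpace ℝ (Fin d)) :
    ‖projBall R v‖ ≤ R := by
  have hm : 0 < max R ‖v‖ := lt_max_of_lt_left hR
  rw [projBall, norm_smul, Real.norm_of_nonneg (by positivity), div_mul_eq_mul_div,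
    div_le_iff₀ hm]
  gcongr
  exact le_max_right _ _

lemma aux_projBall {d : ℕ} {R : ℝ} (hR : 0 < R) (v p : EuclideanSpace ℝ (Fin d))
    (hp : ‖p‖ ≤ R) : ‖projBall R v - p‖ ≤ ‖v - p‖ := by
  rw [projBall]
  rcases le_total ‖v‖ R with h | h
  · rw [max_eq_left h, div_self hR.ne', one_smul]
  · rw [max_eq_right h]
    have hv : 0 < ‖v‖ := hR.trans_le h
    set c := R / ‖v‖ with hc
    have hc0 : 0 < c := by positivity
    have hc1 : c ≤ 1 := by rw [hc, div_le_one hv]; exact h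
    have hcv : c * ‖v‖ = R := by rw [hc]; field_simp
    apply le_of_sq_le_sq _ (norm_nonneg _)
    rw [norm_sub_sq_real, norm_sub_sq_real, norm_smul, real_inner_smul_left,
      Real.norm_of_nonneg hc0.le]
    have h1 : ⟪v, p⟫ ≤ ‖v‖ * R := (real_inner_le_norm v p).trans (by gcongr)
    have h2 : (1 - c) * ⟪v, p⟫ ≤ (1 - c) * (‖v‖ * (c * ‖v‖)) := by
      rw [hcv]; exact mul_le_mul_of_nonneg_left h1 (by linarith)
    nlinarith [mul_nonneg (sq_nonneg (1 - c)) (sq_nonneg ‖v‖)]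

lemma aux_half {d : ℕ} (s v w : EuclideanSpace ℝ (Fin d)) (a b : ℝ) (hs : s ≠ 0)
    (hab : a - b = ⟪s, v - w⟫) :
    ‖(v - (max a 0 / ‖s‖ ^ 2) • s) - (w - (max b 0 / ‖s‖ ^ 2) • s)‖ ≤ ‖v - w‖ := by
  have hsp : 0 < ‖s‖ := norm_pos_iff.2 hs
  have he : (v - (max a 0 / ‖s‖ ^ 2) • s) - (w - (max b 0 / ‖s‖ ^ 2) • s)
      = (v - w) - ((max a 0 - max b 0) / ‖s‖ ^ 2) • s := by
    rw [sub_div, sub_smul]; abel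
  rw [he]
  apply le_of_sq_le_sq _ (norm_nonneg _)
  rw [norm_sub_sq_real, norm_smul, real_inner_smul_right, real_inner_comm, ← hab, mul_pow,
    Real.norm_eq_abs, sq_abs]
  set m := max a 0 - max b 0 with hm
  have hk : m ^ 2 ≤ m * (a - b) := by
    rw [hm]
    rcases le_total a 0 with h1 | h1 <;> rcases le_total b 0 with h2 | h2 <;>
      simp only [max_eq_left, max_eq_right, h1, h2] <;> nlinarith [h1, h2]
  have h3 : (m / ‖s‖ ^ 2) ^ 2 * ‖s‖ ^ 2 = m ^ 2 / ‖s‖ ^ 2 := by field_simp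
  have h4 : m / ‖s‖ ^ 2 * (a - b) = m * (a - b) / ‖s‖ ^ 2 := by field_simp
  rw [h3, h4]
  have h5 : m ^ 2 / ‖s‖ ^ 2 ≤ m * (a - b) / ‖s‖ ^ 2 := by gcongr
  have h6 : 0 ≤ m ^ 2 / ‖s‖ ^ 2 := by positivity
  linarith

theorem stmt6 {d T : ℕ}
    {R Gf Gg ε σ η ρ : ℝ}
    (g : EuclideanSpace ℝ (Fin d) → ℝ)
    (f : ℕ → EuclideanSpace ℝ (Fin d) → ℝ)
    (x y s : ℕ → EuclideanSpace ℝ (Fin d))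
    (hR : 0 < R) (hGf : 0 < Gf) (hGg : 0 < Gg)
    (hgconv : ConvexOn ℝ Set.univ g)
    (hA1 : {z : EuclideanSpace ℝ (Fin d) | g z ≤ 0} ⊆ Metric.closedBall 0 R)
    (hfconv : ∀ t ∈ Finset.Icc 1 T, ConvexOn ℝ Set.univ (f t))
    (hfdiff : ∀ t ∈ Finset.Icc 1 T, Differentiable ℝ (f t))
    (hA2 : ∀ t ∈ Finset.Icc 1 T, ∀ z ∈ Metric.closedBall (0 : EuclideanSpace ℝ (Fin d)) R,
      ‖gradient (f t) z‖ ≤ Gf)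
    (hA3 : ∀ z ∈ Metric.closedBall (0 : EuclideanSpace ℝ (Fin d)) R,
      ∀ sz, IsSubgradAt g z sz → ‖sz‖ ≤ Gg)
    (hσ : 0 < σ) (hε : 0 < ε) (hσGg : σ ≤ Gg)
    (hA4ne : ∃ z, g z = -ε)
    (hA4 : ∀ z : EuclideanSpace ℝ (Fin d), g z = -ε → ∀ sz, IsSubgradAt g z sz → σ ≤ ‖sz‖)
    (hx1 : x 1 ∈ Metric.closedBall (0 : EuclideanSpace ℝ (Fin d)) R)
    (hηdef : η = (1 - Real.sqrt (1 - σ ^ 2 / Gg ^ 2)) * ε / (2 * Gf * Gg * Real.sqrt T))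
    (hρdef : ρ = ε / Real.sqrt T)
    (hTlarge : 4 * R * Gg / (ε * (1 - Real.sqrt (1 - σ ^ 2 / Gg ^ 2))) ≤ Real.sqrt T)
    (hs : ∀ t ∈ Finset.Icc 1 T, IsSubgradAt g (x t) (s t))
    (hy : ∀ t ∈ Finset.Icc 1 T, y t = x t - η • gradient (f t) (x t))
    (hupd : ∀ t ∈ Finset.Icc 1 T,
      x (t + 1) = if s t ≠ 0 then
          projBall R (y t - ((max (g (x t) + ⟪s t, y t - x t⟫ + ρ) 0) / ‖s t‖ ^ 2) • s t)
        else projBall R (y t))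
    :
    ∑ t ∈ Finset.Icc 1 T, g (x t) ≤ 0 := by
  rcases Nat.eq_zero_or_pos T with hT0 | hT
  · subst hT0; simp
  have hT1 : (1 : ℝ) ≤ T := by exact_mod_cast hT
  have hrT : 1 ≤ Real.sqrt T := by rw [Real.one_le_sqrt]; exact hT1
  have hrT2 : Real.sqrt T * Real.sqrt T = T := Real.mul_self_sqrt (by linarith)
  set r := Real.sqrt T with hr
  set γ := 1 - σ ^ 2 / Gg ^ 2 with hγ
  have hγ0 : 0 ≤ γ := by
    have : σ ^ 2 / Gg ^ 2 ≤ 1 := by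
      rw [div_le_one (by positivity)]; gcongr
    linarith
  have hγ1 : γ < 1 := by
    have : 0 < σ ^ 2 / Gg ^ 2 := by positivity
    linarith
  set k := Real.sqrt γ with hk
  have hk0 : 0 ≤ k := Real.sqrt_nonneg _
  have hk1 : k < 1 := by rw [hk, Real.sqrt_lt' one_pos]; simpa using hγ1
  have hk2 : k ^ 2 = γ := Real.sq_sqrt hγ0
  have hξ : 0 < 1 - k := by linarith
  have hη0 : 0 ≤ η := by rw [hηdef]; positivity
  have hρ0 : 0 < ρ := by rw [hρdef]; positivity
  have hρε : ρ ≤ ε := by rw [hρdef]; exact div_le_self hε.le hrT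
  have hc : Continuous g := by
    have := hgconv.continuousOn isOpen_univ
    rwa [continuousOn_univ] at this
  have hxR : ∀ t ∈ Finset.Icc 1 T, ‖x t‖ ≤ R := by
    intro t ht
    rw [Finset.mem_Icc] at ht
    obtain ⟨m, rfl⟩ : ∃ m, t = m + 1 := ⟨t - 1, by omega⟩
    rcases Nat.eq_zero_or_pos m with h | h
    · subst h; simpa using hx1
    · rw [hupd m (Finset.mem_Icc.2 ⟨h, by omega⟩)]
      split_ifs <;> exact aux_projBall_mem hR _
  set X : Set (EuclideanSpace ℝ (Fin d)) := {z | g z ≤ -ρ} with hX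
  have hXc : IsClosed X := isClosed_le hc continuous_const
  have hXne : X.Nonempty := by
    obtain ⟨z, hz⟩ := hA4ne; exact ⟨z, by show g z ≤ -ρ; linarith⟩
  have hXR : ∀ p ∈ X, ‖p‖ ≤ R := by
    intro p hp
    have hp' : g p ≤ -ρ := hp
    simpa using hA1 (show g p ≤ 0 by linarith)
  set D : ℕ → ℝ := fun t => Metric.infDist (x t) X with hD
  have hD0 : ∀ t, 0 ≤ D t := fun t => Metric.infDist_nonneg
  have hstep : ∀ t ∈ Finset.Icc 1 T, D (t + 1) ≤ k * D t + η * Gf := by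
    intro t ht
    obtain ⟨p, hpX, hp⟩ := hXc.exists_infDist_eq_dist hXne (x t)
    have hDp : D t = ‖x t - p‖ := by rw [← dist_eq_norm]; exact hp
    have hpX' : g p ≤ -ρ := hpX
    have hle : D (t + 1) ≤ ‖x (t + 1) - p‖ := by
      rw [← dist_eq_norm]; exact Metric.infDist_le_dist_of_mem hpX
    refine hle.trans ?_
    have hyx : ‖y t - x t‖ ≤ η * Gf := by
      rw [hy t ht, sub_sub_cancel_left, norm_neg, norm_smul, Real.norm_of_nonneg hη0]
      exact mul_le_mul_of_nonneg_left (hA2 t ht _ (by simpa using hxR t ht)) hη0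
    have hst := hs t ht
    have hzero : g (x t) ≤ -ρ → D t = 0 := fun h => Metric.infDist_zero_of_mem h
    by_cases h0 : s t = 0
    · rw [hupd t ht, if_neg (by simpa using h0)]
      refine (aux_projBall hR _ _ (hXR p hpX)).trans ?_
      have hgx : g (x t) ≤ -ρ := by
        have := hst p
        rw [h0, inner_zero_left] at this
        linarith
      have hz := hzero hgx
      have hxp : x t = p := by
        rw [hz] at hDp
        exact sub_eq_zero.1 (norm_eq_zero.1 hDp.symm)
      rw [hz, ← hxp]; linarith
    · rw [hupd t ht, if_pos h0]
      refine (aux_projBall hR _ _ (hXR p hpX)).trans ?_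
      have hH := aux_half (s t) (y t) (x t) (g (x t) + ⟪s t, y t - x t⟫ + ρ) (g (x t) + ρ) h0
        (by ring)
      set A := y t - (max (g (x t) + ⟪s t, y t - x t⟫ + ρ) 0 / ‖s t‖ ^ 2) • s t with hA
      set B := x t - (max (g (x t) + ρ) 0 / ‖s t‖ ^ 2) • s t with hB
      have hBp : ‖B - p‖ ≤ k * D t := by
        rcases le_or_gt (g (x t)) (-ρ) with h | h
        · have hz := hzero h
          rw [hB, max_eq_right (by linarith), zero_div, zero_smul, sub_zero, ← hDp, hz]; simp
        · obtain ⟨q, hqX, hq⟩ := aux_err g hgconv hc hρε hA4ne hA4 (x t) h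
          have hDq : D t ≤ ‖x t - q‖ := by
            rw [← dist_eq_norm]; exact Metric.infDist_le_dist_of_mem hqX
          have hm : 0 < g (x t) + ρ := by linarith
          have hsD : σ * D t ≤ g (x t) + ρ :=
            (mul_le_mul_of_nonneg_left hDq hσ.le).trans hq
          apply le_of_sq_le_sq _ (mul_nonneg hk0 (hD0 t))
          rw [hB, max_eq_left hm.le]
          set m := g (x t) + ρ with hmdef
          have hsp : 0 < ‖s t‖ := norm_pos_iff.2 h0
          have hsG : ‖s t‖ ≤ Gg := hA3 _ (by simpa using hxR t ht) _ hst
          have he : x t - (m / ‖s t‖ ^ 2) • s t - p = (x t - p) - (m / ‖s t‖ ^ 2) • s t := by abel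
          have hip : m ≤ ⟪x t - p, s t⟫ := by
            have h1 := hst p
            rw [← neg_sub (x t) p, inner_neg_right, real_inner_comm] at h1
            linarith
          rw [he, norm_sub_sq_real, norm_smul, real_inner_smul_right, mul_pow,
            Real.norm_eq_abs, sq_abs, mul_pow, hk2, ← hDp]
          have h3 : (m / ‖s t‖ ^ 2) ^ 2 * ‖s t‖ ^ 2 = m ^ 2 / ‖s t‖ ^ 2 := by field_simp
          have h4 : m ^ 2 / ‖s t‖ ^ 2 ≤ m / ‖s t‖ ^ 2 * ⟪x t - p, s t⟫ := by
            have : m ^ 2 / ‖s t‖ ^ 2 = m / ‖s t‖ ^ 2 * m := by field_simp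
            rw [this]; gcongr
          have h5 : σ ^ 2 / Gg ^ 2 * D t ^ 2 ≤ m ^ 2 / ‖s t‖ ^ 2 := by
            rw [div_mul_eq_mul_div, ← mul_pow]
            have := hD0 t
            gcongr
          rw [h3, hγ]
          linarith
      calc ‖A - p‖ = ‖(B - p) + (A - B)‖ := by congr 1; abel
        _ ≤ ‖B - p‖ + ‖A - B‖ := norm_add_le _ _
        _ ≤ k * D t + η * Gf := by linarith
  have hgD : ∀ t ∈ Finset.Icc 1 T, g (x t) ≤ -ρ + Gg * D t := by
    intro t ht
    obtain ⟨p, hpX, hp⟩ := hXc.exists_infDist_eq_dist hXne (x t)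
    have hDp : D t = ‖x t - p‖ := by rw [← dist_eq_norm]; exact hp
    have hpX' : g p ≤ -ρ := hpX
    have h1 := hs t ht p
    have hsG : ‖s t‖ ≤ Gg := hA3 _ (by simpa using hxR t ht) _ (hs t ht)
    have h2 : ⟪s t, x t - p⟫ ≤ Gg * D t := by
      rw [hDp]; exact (real_inner_le_norm _ _).trans (by gcongr)
    rw [← neg_sub (x t) p, inner_neg_right] at h1
    linarith
  have hD1 : D 1 ≤ 2 * R := by
    obtain ⟨p, hp⟩ := hXne
    have h1 : D 1 ≤ ‖x 1 - p‖ := by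
      rw [← dist_eq_norm]; exact Metric.infDist_le_dist_of_mem hp
    have h2 := norm_sub_le (x 1) p
    have h3 := hXR p hp
    have h4 := hxR 1 (Finset.mem_Icc.2 ⟨le_rfl, hT⟩)
    linarith
  have hsum : ∀ n ≤ T, (1 - k) * ∑ t ∈ Finset.Icc 1 n, D t + D (n + 1) ≤ D 1 + n * (η * Gf) := by
    intro n
    induction n with
    | zero => intro _; simp
    | succ n ih =>
      intro hn
      have h1 := ih (by omega)
      have h2 := hstep (n + 1) (Finset.mem_Icc.2 ⟨by omega, hn⟩)
      rw [Finset.sum_Icc_succ_top (by omega)]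
      push_cast
      linarith
  have hS := hsum T le_rfl
  set S := ∑ t ∈ Finset.Icc 1 T, D t with hSdef
  have hfin : ∑ t ∈ Finset.Icc 1 T, g (x t) ≤ -(T * ρ) + Gg * S := by
    refine (Finset.sum_le_sum hgD).trans (le_of_eq ?_)
    rw [Finset.sum_add_distrib, ← Finset.mul_sum, ← hSdef]
    simp
  refine hfin.trans ?_
  have hTρ : T * ρ = r * ε := by rw [hρdef, ← hrT2]; field_simp
  have hTη : Gg * (T * (η * Gf)) = (1 - k) * (r * ε) / 2 := by
    rw [hηdef, ← hrT2]; field_simp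
  rw [div_le_iff₀ (by positivity)] at hTlarge
  have h1 : (1 - k) * S ≤ 2 * R + T * (η * Gf) := by linarith [hD0 (T + 1)]
  have h2 := mul_le_mul_of_nonneg_left h1 hGg.le
  have h3 : (1 - k) * (-(T * ρ) + Gg * S) ≤ 0 := by
    rw [hTρ]; nlinarith
  by_contra hcon
  push Not at hcon
  have := mul_pos hξ hcon
  linarith
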